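/- Let G be a group, P a subgroup of G, k a field, and let (V, ξ) be an Ad-equivariant family over P with induced Ad-equivariant family (W, η) over G, where W x is the space of dependent functions f with f(g) ∈ V (g⁻¹ * x * g) for each g ∈ G with g⁻¹ * x * g ∈ P, satisfying f(g * p) = ξ (p⁻¹) (g⁻¹ * x * g) (f(g)) for all p ∈ P, and (η a x f)(g) := f(a⁻¹ * g). Then the canonical automorphism of the induced family is induced pointwise by the canonical automorphism of the original family: for every x ∈ G, every f ∈ W x, and every g ∈ G with g⁻¹ * x * g ∈ P, one has (η x x f)(g) = ξ (g⁻¹ * x * g) (g⁻¹ * x * g) (f(g)). -/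

import Mathlib

def castLE (k : Type*) [Field k] {ι : Type*} {V : ι → Type*}
    [∀ i, AddCommGroup (V i)] [∀ i, Module k (V i)] {i j : ι} (h : i = j) :
    V i ≃ₗ[k] V j := by subst h; exact LinearEquiv.refl k (V i)

lemma mem_conj {G : Type*} [Group G] (P : Subgroup G) {x g : G} (p : P)
    (h : g⁻¹ * x * g ∈ P) : (g * (p : G))⁻¹ * x * (g * (p : G)) ∈ P := by
  have e : (g * (p : G))⁻¹ * x * (g * (p : G)) = (p : G)⁻¹ * (g⁻¹ * x * g) * (p : G) := by
    group
  rw [e]; exact P.mul_mem (P.mul_mem (P.inv_mem p.2) h) p.2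

lemma mem_transport {G : Type*} [Group G] (P : Subgroup G) (a x g : G)
    (h : g⁻¹ * (a * x * a⁻¹) * g ∈ P) : (a⁻¹ * g)⁻¹ * x * (a⁻¹ * g) ∈ P := by
  have e : (a⁻¹ * g)⁻¹ * x * (a⁻¹ * g) = g⁻¹ * (a * x * a⁻¹) * g := by group
  rw [e]; exact h

variable (k : Type*) [Field k] {G : Type*} [Group G] (P : Subgroup G)

/-- The ambient space of the induced family at `x : G`: dependent functions assigning to
each `g : G` with `g⁻¹ * x * g ∈ P` an element of `V (g⁻¹ * x * g)`. -/
abbrev Wamb (V : P → Type*) (x : G) :=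
  ∀ g : {g : G // g⁻¹ * x * g ∈ P}, V ⟨(g : G)⁻¹ * x * (g : G), g.2⟩

/-- The induced space `W x`: the subspace of `Wamb` consisting of functions compatible
with the `P`-equivariant structure `ξ`. -/
def IndSub (V : P → Type*) [∀ p, AddCommGroup (V p)] [∀ p, Module k (V p)]
    (ξ : ∀ q p : P, V p ≃ₗ[k] V (q * p * q⁻¹)) (x : G) :
    Submodule k (Wamb P V x) where
  carrier := {f | ∀ (g : {g : G // g⁻¹ * x * g ∈ P}) (p : P),
    f ⟨(g : G) * (p : G), mem_conj P p g.2⟩ =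
      castLE k (Subtype.ext (by push_cast; group))
        (ξ p⁻¹ ⟨(g : G)⁻¹ * x * (g : G), g.2⟩ (f g))}
  add_mem' := by
    intro f f' hf hf' g p
    simp only [Pi.add_apply, hf g p, hf' g p, map_add]
  zero_mem' := by
    intro g p
    simp only [Pi.zero_apply, map_zero]
  smul_mem' := by
    intro c f hf g p
    simp only [Pi.smul_apply, hf g p, map_smul]

/-- The structure map of the induced family: `(η a x f)(g) := f (a⁻¹ * g)`. -/
def etaFun (V : P → Type*) [∀ p, AddCommGroup (V p)] [∀ p, Module k (V p)]
    (a x : G) (f : Wamb P V x) : Wamb P V (a * x * a⁻¹) :=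
  fun g =>
    castLE k (Subtype.ext
        (show ((a⁻¹ * (g : G))⁻¹ * x * (a⁻¹ * (g : G)) : G)
            = (g : G)⁻¹ * (a * x * a⁻¹) * (g : G) by group))
      (f ⟨a⁻¹ * (g : G), mem_transport P a x (g : G) g.2⟩)

/-!
The canonical automorphism at `x` translates `f ∈ W x` on the left by `x⁻¹`. Writing
`x⁻¹ * g = g * q⁻¹` with `q = g⁻¹ * x * g ∈ P` turns this into a right translation by an element
of `P`, which the defining relation of `W x` evaluates as `ξ q`. The same computation evaluates
`η a x` at `g` for every `a ∈ g P g⁻¹`.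
-/

lemma conj_conj_of_mul_eq {G : Type*} [Group G] {a g p : G} (h : a * g = g * p) (x : G) :
    g⁻¹ * (a * x * a⁻¹) * g = p * (g⁻¹ * x * g) * p⁻¹ := by
  obtain rfl : a = g * p * g⁻¹ := eq_mul_inv_of_mul_eq h
  group

section

variable {k P}

lemma castLE_castLE {ι : Type*} {V : ι → Type*} [∀ i, AddCommGroup (V i)] [∀ i, Module k (V i)]
    {i j l : ι} (hij : i = j) (hjl : j = l) (v : V i) :
    castLE k hjl (castLE k hij v) = castLE k (hij.trans hjl) v := by
  subst hij hjl
  rfl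

lemma castLE_congrArg_apply {ι κ : Type*} {V : ι → Type*} [∀ i, AddCommGroup (V i)]
    [∀ i, Module k (V i)] (φ : κ → ι) (s : ∀ c, V (φ c)) {c d : κ} (h : c = d) :
    castLE k (congrArg φ h) (s c) = s d := by
  subst h
  rfl

variable {V : P → Type*} [∀ p, AddCommGroup (V p)] [∀ p, Module k (V p)]

lemma castLE_Wamb_apply {x y : G} (h : x = y) (f : Wamb P V x) (g : {g : G // g⁻¹ * y * g ∈ P}) :
    castLE k (V := Wamb P V) h f g =
      castLE k (Subtype.ext (by subst h; rfl)) (f ⟨g, by rw [h]; exact g.2⟩) := by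
  subst h
  rfl

variable {ξ : ∀ q p : P, V p ≃ₗ[k] V (q * p * q⁻¹)} {x : G} {f : Wamb P V x}

lemma IndSub.apply_mul_inv (hf : f ∈ IndSub k P V ξ x) (g : {g : G // g⁻¹ * x * g ∈ P}) (p : P) :
    f ⟨g * (p⁻¹ : P), mem_conj P p⁻¹ g.2⟩ =
      castLE k (Subtype.ext (by push_cast; group)) (ξ p ⟨(g : G)⁻¹ * x * g, g.2⟩ (f g)) := by
  let r : P := ⟨(g : G)⁻¹ * x * g, g.2⟩
  have structure_map : castLE k _ (ξ p⁻¹⁻¹ r (f g)) = ξ p r (f g) :=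
    castLE_congrArg_apply (fun q => q * r * q⁻¹) (fun q => ξ q r (f g)) (inv_inv p)
  rw [hf g p⁻¹, ← structure_map, castLE_castLE]

lemma etaFun_apply_of_mul_eq (hf : f ∈ IndSub k P V ξ x) {a : G} {p : P}
    (g : {g : G // g⁻¹ * x * g ∈ P}) (ha : a * g = g * p) :
    etaFun k P V a x f ⟨g, by
        rw [conj_conj_of_mul_eq ha]
        exact (p * ⟨_, g.2⟩ * p⁻¹ : P).2⟩ =
      castLE k (Subtype.ext (conj_conj_of_mul_eq ha x).symm)
        (ξ p ⟨(g : G)⁻¹ * x * g, g.2⟩ (f g)) := by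
  have translate : (g : G) * (p⁻¹ : P) = a⁻¹ * g := by
    rw [eq_inv_mul_iff_mul_eq, ← mul_assoc, ha, Subgroup.coe_inv, mul_inv_cancel_right]
  have translate_apply := castLE_congrArg_apply (k := k)
    (fun c : {c : G // c⁻¹ * x * c ∈ P} => (⟨(c : G)⁻¹ * x * c, c.2⟩ : P)) f
    (Subtype.ext translate :
      (⟨g * (p⁻¹ : P), mem_conj P p⁻¹ g.2⟩ : {c : G // c⁻¹ * x * c ∈ P}) =
        ⟨a⁻¹ * g, translate ▸ mem_conj P p⁻¹ g.2⟩)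
  rw [etaFun, ← translate_apply, IndSub.apply_mul_inv hf, castLE_castLE, castLE_castLE]

theorem canonical_automorphism_of_induced_family_general (hf : f ∈ IndSub k P V ξ x)
    (g : {g : G // g⁻¹ * x * g ∈ P}) :
    castLE k (V := Wamb P V) (mul_inv_cancel_right x x) (etaFun k P V x x f) g =
      castLE k
        (mul_inv_cancel_right (⟨(g : G)⁻¹ * x * g, g.2⟩ : P) (⟨(g : G)⁻¹ * x * g, g.2⟩ : P))
        (ξ ⟨(g : G)⁻¹ * x * g, g.2⟩ ⟨(g : G)⁻¹ * x * g, g.2⟩ (f g)) := by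
  have left_mul_eq_right_mul : x * g = g * (⟨(g : G)⁻¹ * x * g, g.2⟩ : P) := by group
  rw [castLE_Wamb_apply, etaFun_apply_of_mul_eq hf g left_mul_eq_right_mul, castLE_castLE]

end

/-- The canonical automorphism of the induced family is induced pointwise by the
canonical automorphism of the original family: `(η x x f)(g) = ξ (g⁻¹xg) (g⁻¹xg) (f g)`. -/
theorem canonical_automorphism_of_induced_family
    (V : P → Type*) [∀ p, AddCommGroup (V p)] [∀ p, Module k (V p)]
    (ξ : ∀ q p : P, V p ≃ₗ[k] V (q * p * q⁻¹))
    (cocycle : ∀ q' q p : P, (ξ q p).trans (ξ q' (q * p * q⁻¹)) =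
      (ξ (q' * q) p).trans
        (castLE k (show (q' * q) * p * (q' * q)⁻¹ = q' * (q * p * q⁻¹) * q'⁻¹ by group)))
    (norm : ∀ p : P,
      (ξ 1 p).trans (castLE k (show (1 : P) * p * (1 : P)⁻¹ = p by group)) =
        LinearEquiv.refl k (V p)) :
    ∀ (x : G) (f : Wamb P V x), f ∈ IndSub k P V ξ x →
      ∀ g : {g : G // g⁻¹ * x * g ∈ P},
        castLE k (V := Wamb P V) (show x * x * x⁻¹ = x by group)
            (etaFun k P V x x f) g =
          castLE k
            (mul_inv_cancel_right (⟨(g : G)⁻¹ * x * (g : G), g.2⟩ : P)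
              (⟨(g : G)⁻¹ * x * (g : G), g.2⟩ : P))
            (ξ ⟨(g : G)⁻¹ * x * (g : G), g.2⟩ ⟨(g : G)⁻¹ * x * (g : G), g.2⟩ (f g)) :=
  fun _ _ hf g => canonical_automorphism_of_induced_family_general hf g
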